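/- Define a state to be a tuple (Γᵢ, Γⱼ, wL, wE, wR) where Γᵢ, Γⱼ are lists of integers and wL, wE, wR ∈ ℕ × ℕ, with initial state ([1], [1], (1,0), (1,1), (0,1)). Process a finite word in the letters {L, R} from left to right by: on letter L, replace the state by (Γᵢ with its last entry increased by 1, 2 :: Γⱼ, wL, wL + wE, wE); on letter R, replace it by (Γᵢ ++ [2], Γⱼ with its first entry increased by 1, wE, wE + wR, wR), where addition of pairs is componentwise. Then for every word w, if the resulting state is (Γᵢ, Γⱼ, wL, (a,b), wR), the tridiagonal determinants satisfy: |Γᵢ| = a, |tail of Γᵢ| = b, |Γⱼ| = b, and |Γⱼ with its last entry removed| = a. -/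

import Mathlib

/-- The symmetric tridiagonal matrix with diagonal entries given by the list `L`
and `-1` immediately above and below the diagonal. -/
def triMat (L : List ℤ) : Matrix (Fin L.length) (Fin L.length) ℤ :=
  Matrix.of fun i j =>
    if (i : ℕ) = (j : ℕ) then L.get i
    else if (i : ℕ) + 1 = (j : ℕ) ∨ (j : ℕ) + 1 = (i : ℕ) then -1 else 0

/-- The tridiagonal determinant `|n₁, …, n_k|`; the determinant of the empty list is `1`. -/
def tridet (L : List ℤ) : ℤ := (triMat L).det

/-- The two letters encoding a blowup on the left or on the right. -/
inductive Letter
  | L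
  | R

/-- Increase the first entry of a list of integers by `1`. -/
def incFirst : List ℤ → List ℤ
  | [] => []
  | a :: l => (a + 1) :: l

/-- Increase the last entry of a list of integers by `1`. -/
def incLast (l : List ℤ) : List ℤ := (incFirst l.reverse).reverse

/-- A state `(Γᵢ, Γⱼ, wL, wE, wR)`: the two chains of the dual graph on either side of
the final `(-1)`-curve, and three weight vectors in `ℕ × ℕ`. -/
abbrev BlowupState := List ℤ × List ℤ × (ℕ × ℕ) × (ℕ × ℕ) × (ℕ × ℕ)

/-- Processing one letter: on `L`, increase the last entry of `Γᵢ` by `1`, prepend `2`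
to `Γⱼ`, and replace `(wL, wE, wR)` by `(wL, wL + wE, wE)`; on `R`, append `2` to `Γᵢ`,
increase the first entry of `Γⱼ` by `1`, and replace `(wL, wE, wR)` by `(wE, wE + wR, wR)`. -/
def blowupStep : BlowupState → Letter → BlowupState
  | (Γi, Γj, wL, wE, wR), .L => (incLast Γi, 2 :: Γj, wL, wL + wE, wE)
  | (Γi, Γj, wL, wE, wR), .R => (Γi ++ [2], incFirst Γj, wE, wE + wR, wR)

/-- The initial state `([1], [1], (1,0), (1,1), (0,1))`. -/
def blowupInit : BlowupState := ([1], [1], (1, 0), (1, 1), (0, 1))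

/-!
Expanding `det (T(L))` along its first row and column gives the continuant recursion
`|x, y, l| = x |y, l| - |l|`. Hence, for nonempty `L`, the product of the transfer matrices
`!![x, -1; 1, 0]` over the entries `x` of `L` has first row `(|L|, -|L without its last entry|)` and
lower left entry `|tail of L|`. Adding a `2` at an end of a chain, or incrementing an end entry,
multiplies this product by a fixed matrix. Since `wE = wL + wR`, these multiplications act on the
weights exactly as the two mediant steps do: along the process the product for `Γᵢ` has columns `wE`
and `-wL`, and the product for `Γⱼ` has rows `(b, -a)` for `(a, b) = wE` and `(a, b) = wR`.
-/

theorem det_eq_of_first_row_col_eq_zero {R : Type*} [CommRing R] {n : ℕ}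
    (A : Matrix (Fin (n + 2)) (Fin (n + 2)) R)
    (hrow : ∀ j : Fin n, A 0 j.succ.succ = 0) (hcol : ∀ i : Fin n, A i.succ.succ 0 = 0) :
    A.det = A 0 0 * (A.submatrix Fin.succ Fin.succ).det -
      A 0 1 * A 1 0 * (A.submatrix (Fin.succ ∘ Fin.succ) (Fin.succ ∘ Fin.succ)).det := by
  have hminor : (A.submatrix Fin.succ (Fin.succAbove 1)).det =
      A 1 0 * (A.submatrix (Fin.succ ∘ Fin.succ) (Fin.succ ∘ Fin.succ)).det := by
    have hcols : Fin.succAbove (1 : Fin (n + 2)) ∘ Fin.succ = Fin.succ ∘ Fin.succ := by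
      ext j
      simp [Fin.succAbove_of_lt_succ, Fin.lt_def]
    rw [Matrix.det_succ_column_zero, Fin.sum_univ_succ]
    simp [hcol, Matrix.submatrix_submatrix, hcols]
  rw [Matrix.det_succ_row_zero, Fin.sum_univ_succ, Fin.sum_univ_succ]
  simp [hrow, hminor, sub_eq_add_neg, mul_assoc]

theorem triMat_cons_submatrix_succ (x : ℤ) (l : List ℤ) :
    (triMat (x :: l)).submatrix Fin.succ Fin.succ = triMat l := by
  ext i j
  simp [triMat]

theorem tridet_nil : tridet [] = 1 :=
  Matrix.det_fin_zero

theorem tridet_singleton (x : ℤ) : tridet [x] = x :=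
  Matrix.det_fin_one (triMat [x])

theorem tridet_cons_cons (x y : ℤ) (l : List ℤ) :
    tridet (x :: y :: l) = x * tridet (y :: l) - tridet l := by
  have hminor : (triMat (x :: y :: l)).submatrix (Fin.succ ∘ Fin.succ) (Fin.succ ∘ Fin.succ) =
      triMat l := by
    rw [← Matrix.submatrix_submatrix, triMat_cons_submatrix_succ, triMat_cons_submatrix_succ]
  have hdet := det_eq_of_first_row_col_eq_zero (triMat (x :: y :: l))
    (fun j => by simp [triMat]) (fun i => by simp [triMat])
  rw [triMat_cons_submatrix_succ, hminor] at hdet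
  simpa [triMat, tridet] using hdet

/-- The factor `!![x, -1; 1, 0]` that a chain entry `x` contributes to the transfer matrix; it
sends `(|l|, |tail of l|)` to `(|x :: l|, |l|)` when `l` is nonempty. -/
def entryMatrix {R : Type*} [Ring R] (x : R) : Matrix (Fin 2) (Fin 2) R := !![x, -1; 1, 0]

/-- The transfer matrix of a chain: the product, in order, of the matrices of its entries. For
a nonempty chain its first row and column are tridiagonal determinants up to sign. -/
def transferMatrix {R : Type*} [Ring R] (l : List R) : Matrix (Fin 2) (Fin 2) R :=
  (l.map entryMatrix).prod

section TransferMatrix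

variable {R : Type*} [Ring R]

theorem entryMatrix_add_one_eq_mul_left (x : R) :
    entryMatrix (x + 1) = !![1, 1; 0, 1] * entryMatrix x := by
  simp [entryMatrix]

theorem entryMatrix_add_one_eq_mul_right (x : R) :
    entryMatrix (x + 1) = entryMatrix x * !![1, 0; -1, 1] := by
  simp [entryMatrix]

theorem transferMatrix_cons (x : R) (l : List R) :
    transferMatrix (x :: l) = entryMatrix x * transferMatrix l := by
  simp [transferMatrix]

theorem transferMatrix_concat (l : List R) (x : R) :
    transferMatrix (l ++ [x]) = transferMatrix l * entryMatrix x := by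
  simp [transferMatrix]

theorem transferMatrix_cons_zero_zero (x : R) (l : List R) :
    transferMatrix (x :: l) 0 0 = x * transferMatrix l 0 0 - transferMatrix l 1 0 := by
  simp [transferMatrix_cons, entryMatrix, Matrix.mul_apply, sub_eq_add_neg]

theorem transferMatrix_cons_one_zero (x : R) (l : List R) :
    transferMatrix (x :: l) 1 0 = transferMatrix l 0 0 := by
  simp [transferMatrix_cons, entryMatrix, Matrix.mul_apply]

theorem transferMatrix_concat_zero_one (l : List R) (x : R) :
    transferMatrix (l ++ [x]) 0 1 = -transferMatrix l 0 0 := by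
  simp [transferMatrix_concat, entryMatrix, Matrix.mul_apply]

end TransferMatrix

theorem transferMatrix_zero_zero : ∀ l : List ℤ, transferMatrix l 0 0 = tridet l
  | [] => by simp [transferMatrix, tridet_nil]
  | [x] => by simp [transferMatrix, entryMatrix, tridet_singleton]
  | x :: y :: l => by
    rw [transferMatrix_cons_zero_zero, transferMatrix_cons_one_zero, tridet_cons_cons,
      transferMatrix_zero_zero (y :: l), transferMatrix_zero_zero l]

theorem transferMatrix_one_zero {l : List ℤ} (hl : l ≠ []) :
    transferMatrix l 1 0 = tridet l.tail := by
  obtain ⟨x, l, rfl⟩ := List.exists_cons_of_ne_nil hl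
  rw [transferMatrix_cons_one_zero, transferMatrix_zero_zero, List.tail_cons]

theorem transferMatrix_zero_one {l : List ℤ} (hl : l ≠ []) :
    transferMatrix l 0 1 = -tridet l.dropLast := by
  obtain ⟨l, x, rfl⟩ := (List.eq_nil_or_concat' l).resolve_left hl
  rw [transferMatrix_concat_zero_one, transferMatrix_zero_zero, List.dropLast_concat]

theorem incLast_concat (l : List ℤ) (x : ℤ) : incLast (l ++ [x]) = l ++ [x + 1] := by
  simp [incLast, incFirst]

theorem incFirst_ne_nil {l : List ℤ} (hl : l ≠ []) : incFirst l ≠ [] := by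
  obtain ⟨x, l, rfl⟩ := List.exists_cons_of_ne_nil hl
  exact List.cons_ne_nil _ _

theorem incLast_ne_nil {l : List ℤ} (hl : l ≠ []) : incLast l ≠ [] := by
  obtain ⟨l, x, rfl⟩ := (List.eq_nil_or_concat' l).resolve_left hl
  simp [incLast_concat]

theorem transferMatrix_incFirst {l : List ℤ} (hl : l ≠ []) :
    transferMatrix (incFirst l) = !![1, 1; 0, 1] * transferMatrix l := by
  obtain ⟨x, l, rfl⟩ := List.exists_cons_of_ne_nil hl
  rw [incFirst, transferMatrix_cons, transferMatrix_cons, entryMatrix_add_one_eq_mul_left,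
    Matrix.mul_assoc]

theorem transferMatrix_incLast {l : List ℤ} (hl : l ≠ []) :
    transferMatrix (incLast l) = transferMatrix l * !![1, 0; -1, 1] := by
  obtain ⟨l, x, rfl⟩ := (List.eq_nil_or_concat' l).resolve_left hl
  rw [incLast_concat, transferMatrix_concat, transferMatrix_concat,
    entryMatrix_add_one_eq_mul_right, Matrix.mul_assoc]

/-- The invariant of the blowup process: `wE` is the mediant of its neighbours, and the transfer
matrices of the two nonempty chains are read off from the weights. -/
structure BlowupInvariant (Γi Γj : List ℤ) (wL wE wR : ℕ × ℕ) : Prop where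
  left_ne_nil : Γi ≠ []
  right_ne_nil : Γj ≠ []
  mediant : wE = wL + wR
  transferMatrix_left : transferMatrix Γi = !![(wE.1 : ℤ), -wL.1; (wE.2 : ℤ), -wL.2]
  transferMatrix_right : transferMatrix Γj = !![(wE.2 : ℤ), -wE.1; (wR.2 : ℤ), -wR.1]

namespace BlowupInvariant

variable {Γi Γj Γi' Γj' : List ℤ} {wL wE wR wL' wE' wR' : ℕ × ℕ}

theorem init : BlowupInvariant [1] [1] (1, 0) (1, 1) (0, 1) where
  left_ne_nil := List.cons_ne_nil _ _
  right_ne_nil := List.cons_ne_nil _ _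
  mediant := rfl
  transferMatrix_left := by simp [transferMatrix, entryMatrix]
  transferMatrix_right := by simp [transferMatrix, entryMatrix]

theorem step_left (h : BlowupInvariant Γi Γj wL wE wR) :
    BlowupInvariant (incLast Γi) (2 :: Γj) wL (wL + wE) wE where
  left_ne_nil := incLast_ne_nil h.left_ne_nil
  right_ne_nil := List.cons_ne_nil _ _
  mediant := rfl
  transferMatrix_left := by
    rw [transferMatrix_incLast h.left_ne_nil, h.transferMatrix_left, Matrix.mul_fin_two]
    simp [add_comm]
  transferMatrix_right := by
    rw [transferMatrix_cons, h.transferMatrix_right, entryMatrix, Matrix.mul_fin_two, h.mediant]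
    simp only [Prod.fst_add, Prod.snd_add, Nat.cast_add]
    ring_nf

theorem step_right (h : BlowupInvariant Γi Γj wL wE wR) :
    BlowupInvariant (Γi ++ [2]) (incFirst Γj) wE (wE + wR) wR where
  left_ne_nil := by simp
  right_ne_nil := incFirst_ne_nil h.right_ne_nil
  mediant := rfl
  transferMatrix_left := by
    rw [transferMatrix_concat, h.transferMatrix_left, entryMatrix, Matrix.mul_fin_two, h.mediant]
    simp only [Prod.fst_add, Prod.snd_add, Nat.cast_add]
    ring_nf
  transferMatrix_right := by
    rw [transferMatrix_incFirst h.right_ne_nil, h.transferMatrix_right, Matrix.mul_fin_two]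
    simp [add_comm]

theorem foldl {w : List Letter} (h : BlowupInvariant Γi Γj wL wE wR)
    (hw : w.foldl blowupStep (Γi, Γj, wL, wE, wR) = (Γi', Γj', wL', wE', wR')) :
    BlowupInvariant Γi' Γj' wL' wE' wR' := by
  induction w generalizing Γi Γj wL wE wR with
  | nil =>
    cases hw
    exact h
  | cons letter w ih =>
    cases letter with
    | L => exact ih h.step_left hw
    | R => exact ih h.step_right hw

theorem tridet_left (h : BlowupInvariant Γi Γj wL wE wR) : tridet Γi = wE.1 := by
  simp [← transferMatrix_zero_zero, h.transferMatrix_left]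

theorem tridet_tail_left (h : BlowupInvariant Γi Γj wL wE wR) : tridet Γi.tail = wE.2 := by
  simp [← transferMatrix_one_zero h.left_ne_nil, h.transferMatrix_left]

theorem tridet_right (h : BlowupInvariant Γi Γj wL wE wR) : tridet Γj = wE.2 := by
  simp [← transferMatrix_zero_zero, h.transferMatrix_right]

theorem tridet_dropLast_right (h : BlowupInvariant Γi Γj wL wE wR) :
    tridet Γj.dropLast = wE.1 := by
  simpa [h.transferMatrix_right] using (transferMatrix_zero_one h.right_ne_nil).symm

end BlowupInvariant

/-- After processing any word in the letters `{L, R}`, if the resulting state is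
`(Γᵢ, Γⱼ, wL, (a, b), wR)`, then `|Γᵢ| = a`, `|tail Γᵢ| = b`, `|Γⱼ| = b`, and
`|Γⱼ with its last entry removed| = a`. -/
theorem blowup_tridet (w : List Letter) (Γi Γj : List ℤ) (wL wR : ℕ × ℕ) (a b : ℕ)
    (h : w.foldl blowupStep blowupInit = (Γi, Γj, wL, (a, b), wR)) :
    tridet Γi = (a : ℤ) ∧ tridet Γi.tail = (b : ℤ) ∧
    tridet Γj = (b : ℤ) ∧ tridet Γj.dropLast = (a : ℤ) := by
  have hinv : BlowupInvariant Γi Γj wL (a, b) wR := BlowupInvariant.init.foldl h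
  exact ⟨hinv.tridet_left, hinv.tridet_tail_left, hinv.tridet_right, hinv.tridet_dropLast_right⟩
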